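/- arXiv:0711.0071 — 2 statements merged into one kernel-verified Lean document; each statement's English description precedes it below -/
import Mathlib

section
/- (Edge inequality.) Let μ : W → V be any collection, and let w ∈ W, i ∈ I, L ∈ ℝ be such that μ_{w s_i} − μ_w = L · (w·h_i). Then μ_{w s_i} ≥_w μ_w if and only if (w s_i·Λ_i)(μ_{w s_i}) + (w·Λ_i)(μ_w) + Σ_{j∈I, j≠i} a_{ji} (w·Λ_j)(μ_w) ≤ 0. -/
/-!
Transporting everything by `w⁻¹` reduces to `w = 1`. Put `u = w⁻¹·μ_w`, so that
`w⁻¹·μ_{w s_i} = u + L h_i`. The fundamental weights `Λ_j` are dual to the coroots `h_j`, hence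
`L h_i` lies in the coroot cone iff `L ≥ 0`, and expanding `u ∈ V` as `∑_j Λ_j(u) h_j` gives
`∑_j a_{ji} Λ_j(u) = α_i(u)` for the simple root `α_i = x_i - x_{i+1}`. Since
`Λ_i ∘ s_i = Λ_i - α_i`, the left-hand side of the inequality is
`(Λ_i - α_i)(u + L h_i) + (α_i(u) - Λ_i(u)) = -L`.
-/

namespace MV

/-- The action of a permutation `w` on `ℝ^N`: `(w·x)_k = x_{w⁻¹(k)}`. -/
def act (ℓ : ℕ) (w : Equiv.Perm (Fin (ℓ+1))) (x : Fin (ℓ+1) → ℝ) : Fin (ℓ+1) → ℝ :=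
  fun k => x (w⁻¹ k)

/-- The subspace `V = {x ∈ ℝ^N : Σ x_k = 0}`. -/
def Vsub (ℓ : ℕ) : Set (Fin (ℓ+1) → ℝ) := {x | ∑ k, x k = 0}

/-- The simple coroot `h_i = e_i - e_{i+1}` (here `i : Fin ℓ` encodes the 1-based index `i+1`). -/
def coroot (ℓ : ℕ) (i : Fin ℓ) : Fin (ℓ+1) → ℝ :=
  fun k => (if (k : ℕ) = (i : ℕ) then 1 else 0) - (if (k : ℕ) = (i : ℕ) + 1 then 1 else 0)

/-- The cone `Σ_{j∈I} ℝ_{≥0} h_j`. -/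
def corootCone (ℓ : ℕ) : Set (Fin (ℓ+1) → ℝ) :=
  {x | ∃ c : Fin ℓ → ℝ, (∀ j, 0 ≤ c j) ∧ x = ∑ j, c j • coroot ℓ j}

/-- The partial order `h ≥_w h'`. -/
def geOrd (ℓ : ℕ) (w : Equiv.Perm (Fin (ℓ+1))) (h h' : Fin (ℓ+1) → ℝ) : Prop :=
  act ℓ w⁻¹ (h - h') ∈ corootCone ℓ

/-- The simple reflection `s_i`, the transposition of (1-based) `i` and `i+1`. -/
def simpleRefl (ℓ : ℕ) (i : Fin ℓ) : Equiv.Perm (Fin (ℓ+1)) :=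
  Equiv.swap i.castSucc i.succ

/-- The longest element `w₀ : k ↦ N+1-k`. -/
def w0 (ℓ : ℕ) : Equiv.Perm (Fin (ℓ+1)) := Fin.revPerm

/-- The chamber weight functional `w·Λ_i : x ↦ x_{w(1)} + ⋯ + x_{w(i)}`. -/
def chamberWt (ℓ : ℕ) (w : Equiv.Perm (Fin (ℓ+1))) (i : Fin ℓ) (x : Fin (ℓ+1) → ℝ) : ℝ :=
  ∑ k ∈ Finset.univ.filter (fun k : Fin (ℓ+1) => (k : ℕ) ≤ (i : ℕ)), x (w k)

/-- The set `𝒱` of GGMS data. -/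
def calV (ℓ : ℕ) : Set (Equiv.Perm (Fin (ℓ+1)) → Fin (ℓ+1) → ℝ) :=
  {μ | (∀ w, μ w ∈ Vsub ℓ) ∧ (∀ w w', geOrd ℓ w (μ w') (μ w)) ∧ μ (w0 ℓ) = 0}

/-- The Cartan matrix of type `A_ℓ`. -/
def cartan (ℓ : ℕ) (i j : Fin ℓ) : ℝ :=
  if i = j then 2 else if (i : ℕ) + 1 = (j : ℕ) ∨ (j : ℕ) + 1 = (i : ℕ) then -1 else 0

/-- The linear involution `J : (Jx)_k = -x_{N+1-k}`. -/
def Jmap (ℓ : ℕ) (x : Fin (ℓ+1) → ℝ) : Fin (ℓ+1) → ℝ := fun k => - x k.rev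

/-- Nat-indexed (0-based) simple coroot, used for the folded coroots. -/
def corootN (ℓ : ℕ) (j : ℕ) : Fin (ℓ+1) → ℝ :=
  fun k => (if (k : ℕ) = j then 1 else 0) - (if (k : ℕ) = j + 1 then 1 else 0)

/-- The folded simple coroot `h_j^ω` (here `j : Fin n` encodes the 1-based index `j+1`):
`h_j^ω = h_j + h_{ℓ+1-j}` for `1 ≤ j ≤ n-1`, `h_n^ω = h_n` if `ℓ = 2n-1`, and
`h_n^ω = 2(h_n + h_{n+1})` if `ℓ = 2n`. -/
def fcoroot (ℓ n : ℕ) (j : Fin n) : Fin (ℓ+1) → ℝ :=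
  if (j : ℕ) + 1 < n then corootN ℓ j + corootN ℓ (ℓ - 1 - j)
  else if ℓ = 2 * n - 1 then corootN ℓ j
  else (2 : ℝ) • (corootN ℓ j + corootN ℓ ((j : ℕ) + 1))

/-- The folded coroot cone `Σ_{j=1}^{n} ℝ_{≥0} h_j^ω`. -/
def fcone (ℓ n : ℕ) : Set (Fin (ℓ+1) → ℝ) :=
  {x | ∃ c : Fin n → ℝ, (∀ j, 0 ≤ c j) ∧ x = ∑ j, c j • fcoroot ℓ n j}


/-- The simple transposition `s_{a+1}` (0-based `a`) in the symmetric group of `{1,…,m+1}`. -/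
def swN (m a : ℕ) : Equiv.Perm (Fin (m+1)) :=
  if h : a + 1 ≤ m then Equiv.swap ⟨a, by omega⟩ ⟨a + 1, by omega⟩ else 1

end MV

open MV

namespace MV

variable {ℓ : ℕ}

/-- The fundamental weight `Λ_i : x ↦ x_1 + ⋯ + x_i`, as a functional on the whole of `ℝ^N`.
With 0-based indices the sum runs over the coordinates up to and including `i.castSucc`. -/
def fundamentalWeight (i : Fin ℓ) : (Fin (ℓ + 1) → ℝ) →ₗ[ℝ] ℝ :=
  ∑ k ∈ Finset.Iic i.castSucc, LinearMap.proj k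

/-- The simple root `α_i : x ↦ x_i - x_{i+1}`, as a functional on the whole of `ℝ^N`. It is the
functional through which `s_i` acts as a reflection. -/
def simpleRoot (i : Fin ℓ) : (Fin (ℓ + 1) → ℝ) →ₗ[ℝ] ℝ :=
  .proj (R := ℝ) (φ := fun _ => ℝ) i.castSucc - .proj i.succ

lemma fundamentalWeight_apply (i : Fin ℓ) (x : Fin (ℓ + 1) → ℝ) :
    fundamentalWeight i x = ∑ k ∈ Finset.Iic i.castSucc, x k := by
  simp [fundamentalWeight]

lemma simpleRoot_apply (i : Fin ℓ) (x : Fin (ℓ + 1) → ℝ) :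
    simpleRoot i x = x i.castSucc - x i.succ :=
  rfl

lemma coroot_eq_single_sub_single (i : Fin ℓ) :
    coroot ℓ i = Pi.single i.castSucc 1 - Pi.single i.succ 1 := by
  ext k
  simp [coroot, Pi.single_apply, Fin.ext_iff]

lemma simpleRoot_coroot (i j : Fin ℓ) : simpleRoot i (coroot ℓ j) = cartan ℓ j i := by
  simp only [simpleRoot_apply, coroot, cartan, Fin.ext_iff, Fin.val_castSucc, Fin.val_succ]
  split_ifs <;> first | omega | norm_num

lemma fundamentalWeight_coroot (i j : Fin ℓ) :
    fundamentalWeight i (coroot ℓ j) = if i = j then 1 else 0 := by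
  simp only [fundamentalWeight_apply, coroot_eq_single_sub_single, Pi.sub_apply,
    Finset.sum_sub_distrib, Finset.sum_pi_single', Finset.mem_Iic, Fin.le_def, Fin.val_castSucc,
    Fin.val_succ, Fin.ext_iff]
  split_ifs <;> first | omega | norm_num

lemma smul_coroot_mem_Vsub (i : Fin ℓ) (c : ℝ) : c • coroot ℓ i ∈ Vsub ℓ := by
  simp [Vsub, coroot_eq_single_sub_single, ← Finset.mul_sum]

lemma fundamentalWeight_sum_smul_coroot (c : Fin ℓ → ℝ) (i : Fin ℓ) :
    fundamentalWeight i (∑ j, c j • coroot ℓ j) = c i := by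
  simp [fundamentalWeight_coroot]

lemma sum_Iio_succ_eq_fundamentalWeight (x : Fin (ℓ + 1) → ℝ) (i : Fin ℓ) :
    ∑ k ∈ Finset.Iio i.succ, x k = fundamentalWeight i x := by
  rw [fundamentalWeight_apply]
  exact Finset.sum_congr (by ext k; simp [Fin.le_castSucc_iff]) fun _ _ => rfl

lemma sum_fundamentalWeight_smul_coroot {x : Fin (ℓ + 1) → ℝ} (hx : x ∈ Vsub ℓ) :
    ∑ j, fundamentalWeight j x • coroot ℓ j = x := by
  -- Abel summation; the boundary terms are the sum over all indices and the empty sum.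
  ext k
  have upper : ∑ j : Fin ℓ, fundamentalWeight j x * (Pi.single j.castSucc 1 : _ → ℝ) k
      = ∑ m ∈ Finset.Iic k, x m := by
    have h := Fin.sum_univ_castSucc
      fun m => (∑ n ∈ Finset.Iic m, x n) * (Pi.single m 1 : _ → ℝ) k
    have top : ∑ n ∈ Finset.Iic (Fin.last ℓ), x n = 0 := by
      rw [← Fin.top_eq_last, Finset.Iic_top]
      exact hx
    simpa [fundamentalWeight_apply, top, Pi.single_apply] using h.symm
  have lower : ∑ j : Fin ℓ, fundamentalWeight j x * (Pi.single j.succ 1 : _ → ℝ) k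
      = ∑ m ∈ Finset.Iio k, x m := by
    have h := Fin.sum_univ_succ
      fun m => (∑ n ∈ Finset.Iio m, x n) * (Pi.single m 1 : _ → ℝ) k
    have bottom : ∑ n ∈ Finset.Iio (0 : Fin (ℓ + 1)), x n = 0 := by
      rw [← bot_eq_zero, Finset.Iio_bot, Finset.sum_empty]
    simpa [sum_Iio_succ_eq_fundamentalWeight, bottom, Pi.single_apply] using h.symm
  calc (∑ j, fundamentalWeight j x • coroot ℓ j) k
      = ∑ m ∈ Finset.Iic k, x m - ∑ m ∈ Finset.Iio k, x m := by
        rw [← upper, ← lower]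
        simp [coroot_eq_single_sub_single, mul_sub]
    _ = x k := by
        rw [← Finset.Iio_insert, Finset.sum_insert (by simp), add_sub_cancel_right]

lemma mem_corootCone_iff {x : Fin (ℓ + 1) → ℝ} (hx : x ∈ Vsub ℓ) :
    x ∈ corootCone ℓ ↔ ∀ j, 0 ≤ fundamentalWeight j x := by
  refine ⟨?_, fun h => ⟨_, h, (sum_fundamentalWeight_smul_coroot hx).symm⟩⟩
  rintro ⟨c, hc, rfl⟩ j
  rw [fundamentalWeight_sum_smul_coroot]
  exact hc j

lemma smul_coroot_mem_corootCone_iff (i : Fin ℓ) (c : ℝ) :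
    c • coroot ℓ i ∈ corootCone ℓ ↔ 0 ≤ c := by
  rw [mem_corootCone_iff (smul_coroot_mem_Vsub i c)]
  simp only [map_smul, fundamentalWeight_coroot, smul_eq_mul, mul_ite, mul_one, mul_zero]
  refine ⟨fun h => by simpa using h i, fun hc j => ?_⟩
  split_ifs <;> simp [hc]

lemma sum_cartan_mul_fundamentalWeight {x : Fin (ℓ + 1) → ℝ} (hx : x ∈ Vsub ℓ) (i : Fin ℓ) :
    ∑ j, cartan ℓ j i * fundamentalWeight j x = simpleRoot i x := by
  conv_rhs => rw [← sum_fundamentalWeight_smul_coroot hx]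
  simp [simpleRoot_coroot, mul_comm]

lemma act_simpleRefl (i : Fin ℓ) (x : Fin (ℓ + 1) → ℝ) :
    act ℓ (simpleRefl ℓ i) x = x - simpleRoot i x • coroot ℓ i := by
  ext k
  simp only [act, simpleRefl, Equiv.swap_inv, coroot_eq_single_sub_single, simpleRoot_apply,
    Equiv.swap_apply_def, Pi.sub_apply, Pi.smul_apply, Pi.single_apply, smul_eq_mul]
  split_ifs <;> simp_all

lemma fundamentalWeight_act_simpleRefl (i : Fin ℓ) (x : Fin (ℓ + 1) → ℝ) :
    fundamentalWeight i (act ℓ (simpleRefl ℓ i) x) = fundamentalWeight i x - simpleRoot i x := by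
  simp [act_simpleRefl, fundamentalWeight_coroot]

lemma act_mem_Vsub {x : Fin (ℓ + 1) → ℝ} (hx : x ∈ Vsub ℓ) (w : Equiv.Perm (Fin (ℓ + 1))) :
    act ℓ w x ∈ Vsub ℓ :=
  (Equiv.sum_comp w⁻¹ x).trans hx

lemma act_mul (v w : Equiv.Perm (Fin (ℓ + 1))) (x : Fin (ℓ + 1) → ℝ) :
    act ℓ (v * w) x = act ℓ v (act ℓ w x) := by
  ext k
  simp [act]

lemma act_sub (w : Equiv.Perm (Fin (ℓ + 1))) (x y : Fin (ℓ + 1) → ℝ) :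
    act ℓ w (x - y) = act ℓ w x - act ℓ w y :=
  rfl

lemma act_inv_smul_act (w : Equiv.Perm (Fin (ℓ + 1))) (c : ℝ) (x : Fin (ℓ + 1) → ℝ) :
    act ℓ w⁻¹ (c • act ℓ w x) = c • x := by
  ext k
  simp [act]

lemma chamberWt_eq_fundamentalWeight (w : Equiv.Perm (Fin (ℓ + 1))) (i : Fin ℓ)
    (x : Fin (ℓ + 1) → ℝ) :
    chamberWt ℓ w i x = fundamentalWeight i (act ℓ w⁻¹ x) := by
  rw [fundamentalWeight_apply, chamberWt]
  simp only [act, inv_inv]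
  congr 1
  ext k
  simp [Fin.le_def]

lemma chamberWt_mul_simpleRefl (w : Equiv.Perm (Fin (ℓ + 1))) (i : Fin ℓ)
    (x : Fin (ℓ + 1) → ℝ) :
    chamberWt ℓ (w * simpleRefl ℓ i) i x
      = fundamentalWeight i (act ℓ w⁻¹ x) - simpleRoot i (act ℓ w⁻¹ x) := by
  have hinv : (simpleRefl ℓ i)⁻¹ = simpleRefl ℓ i := Equiv.swap_inv _ _
  rw [chamberWt_eq_fundamentalWeight, mul_inv_rev, hinv, act_mul, fundamentalWeight_act_simpleRefl]

lemma geOrd_iff_of_sub_eq_smul {x y : Fin (ℓ + 1) → ℝ} {w : Equiv.Perm (Fin (ℓ + 1))} {i : Fin ℓ}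
    {L : ℝ} (h : x - y = L • act ℓ w (coroot ℓ i)) : geOrd ℓ w x y ↔ 0 ≤ L := by
  rw [geOrd, h, act_inv_smul_act, smul_coroot_mem_corootCone_iff]

lemma chamberWt_edge_sum_eq_neg {x y : Fin (ℓ + 1) → ℝ} (hy : y ∈ Vsub ℓ)
    {w : Equiv.Perm (Fin (ℓ + 1))} {i : Fin ℓ} {L : ℝ}
    (h : x - y = L • act ℓ w (coroot ℓ i)) :
    chamberWt ℓ (w * simpleRefl ℓ i) i x + chamberWt ℓ w i y
      + ∑ j ∈ Finset.univ.erase i, cartan ℓ j i * chamberWt ℓ w j y = -L := by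
  set u := act ℓ w⁻¹ y with hu
  have hx : act ℓ w⁻¹ x = u + L • coroot ℓ i := by
    rw [← sub_eq_iff_eq_add', hu, ← act_sub, h, act_inv_smul_act]
  have hweight : fundamentalWeight i (coroot ℓ i) = 1 := by simp [fundamentalWeight_coroot]
  have hcartan : cartan ℓ i i = 2 := by simp [cartan]
  have hsum := sum_cartan_mul_fundamentalWeight (act_mem_Vsub hy w⁻¹) i
  rw [← Finset.add_sum_erase _ _ (Finset.mem_univ i), hcartan, ← hu] at hsum
  rw [chamberWt_mul_simpleRefl]
  simp only [chamberWt_eq_fundamentalWeight, hx, ← hu, map_add, map_smul, hweight,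
    simpleRoot_coroot, hcartan, smul_eq_mul]
  linarith

end MV

theorem stmt4_general (ℓ : ℕ) (w : Equiv.Perm (Fin (ℓ + 1))) (i : Fin ℓ)
    (x y : Fin (ℓ + 1) → ℝ) (hy : y ∈ Vsub ℓ) (L : ℝ)
    (hL : x - y = L • act ℓ w (coroot ℓ i)) :
    geOrd ℓ w x y
    ↔ chamberWt ℓ (w * simpleRefl ℓ i) i x + chamberWt ℓ w i y
        + ∑ j ∈ Finset.univ.erase i, cartan ℓ j i * chamberWt ℓ w j y ≤ 0 := by
  rw [geOrd_iff_of_sub_eq_smul hL, chamberWt_edge_sum_eq_neg hy hL, neg_nonpos]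

/-- edge inequality: if `μ_{w s_i} - μ_w = L · (w·h_i)`, then
`μ_{w s_i} ≥_w μ_w` iff
`M_{w s_i·Λ_i} + M_{w·Λ_i} + Σ_{j≠i} a_{ji} M_{w·Λ_j} ≤ 0`. -/
theorem stmt4 (ℓ : ℕ) (hℓ : 3 ≤ ℓ)
    (μ : Equiv.Perm (Fin (ℓ+1)) → Fin (ℓ+1) → ℝ) (hV : ∀ w, μ w ∈ Vsub ℓ)
    (w : Equiv.Perm (Fin (ℓ+1))) (i : Fin ℓ) (L : ℝ)
    (hL : μ (w * simpleRefl ℓ i) - μ w = L • act ℓ w (coroot ℓ i)) :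
    geOrd ℓ w (μ (w * simpleRefl ℓ i)) (μ w)
    ↔ chamberWt ℓ (w * simpleRefl ℓ i) i (μ (w * simpleRefl ℓ i))
        + chamberWt ℓ w i (μ w)
        + ∑ j ∈ Finset.univ.erase i, cartan ℓ j i * chamberWt ℓ w j (μ w) ≤ 0 := by
  exact stmt4_general ℓ w i _ _ (hV w) L hL
end

section
/- Let μ• ∈ 𝒱^ω and let Fix(J) = {x ∈ ℝ^N : Jx = x}. Then {h ∈ V ∩ Fix(J) : h ≥_w μ_w for all w ∈ W^ω} = {h ∈ V : h ≥_w μ_w for all w ∈ W} ∩ Fix(J); that is, the folded polytope cut out by the conditions at ω-fixed Weyl group elements equals the intersection of the full pseudo-Weyl polytope P(μ•) with the fixed subspace of J. -/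
open MV

/-!
By Abel summation, `h ≥_w h'` says that `h` and `h'` have the same total and that the sum of `h`
over each set `w{1,…,k}` is at least that of `h'`.

A `J`-fixed vector is odd under the reversal `rev`, so it sums to zero over the `rev`-stable set
`S ∩ rev S`; hence its sums over `S = w{1,…,k}` and over `T = S \ rev S` agree. As `T` is disjoint
from `rev T`, it has the form `v{1,…,|T|}` for some `v` commuting with `rev`, that is, `v ∈ W^ω`.
Then `μ_v` is `J`-fixed, and `h(S) = h(T) ≥ μ_v(T) = μ_v(S) ≥ μ_w(S)`: the first inequality is the
condition on `h` at `v`, the second is `μ_v ≥_w μ_w`.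
-/

namespace MV

open Finset Function Equiv

section Involution

variable {α : Type*}

lemma sum_filter_apply_notMem_of_odd [DecidableEq α] {M : Type*} [AddCommGroup M]
    [IsAddTorsionFree M] {τ : α → α} (hτ : Involutive τ) {x : α → M} (hx : ∀ k, x (τ k) = -x k)
    (S : Finset α) :
    ∑ k ∈ S with τ k ∉ S, x k = ∑ k ∈ S, x k := by
  have hstable : ∑ k ∈ S with τ k ∈ S, x k = 0 := by
    refine sum_involution (fun k _ => τ k) (fun k _ => by rw [hx, add_neg_cancel])
      (fun k _ hk hfix => hk ?_) (fun k hk => ?_) (fun k _ => hτ k)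
    · rw [← self_eq_neg, ← hx, hfix]
    · simpa only [mem_filter, hτ k] using (mem_filter.1 hk).symm
  rw [← sum_filter_add_sum_filter_not S (τ · ∈ S), hstable, zero_add]

lemma two_mul_card_le_card_of_apply_notMem [Fintype α] {τ : α → α} (hτ : Injective τ)
    {T : Finset α} (hT : ∀ a ∈ T, τ a ∉ T) : 2 * #T ≤ Fintype.card α := by
  classical
  have hdisj : Disjoint T (T.image τ) := by
    rw [disjoint_right]
    exact forall_mem_image.2 hT
  calc 2 * #T = #(T ∪ T.image τ) := by
        rw [card_union_of_disjoint hdisj, card_image_of_injective _ hτ, two_mul]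
    _ ≤ Fintype.card α := card_le_univ _

variable {τ : Perm α}

lemma exists_commute_apply_eq (hτ : Involutive τ) {a b : α} (ha : τ a ≠ a) (hb : τ b ≠ b) :
    ∃ u : Perm α, Commute τ u ∧ u a = b ∧
      ∀ k, k ≠ a → k ≠ b → k ≠ τ a → k ≠ τ b → u k = k := by
  classical
  have hconj (x y : α) : SemiconjBy τ (swap x y) (swap (τ x) (τ y)) := mul_swap_eq_swap_mul τ x y
  by_cases hab : b = τ a
  · subst hab
    refine ⟨swap a (τ a), ?_, swap_apply_left _ _, fun k hka hkb _ _ =>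
      swap_apply_of_ne_of_ne hka hkb⟩
    simpa only [Commute, hτ a, swap_comm (τ a) a] using hconj a (τ a)
  · have hswap : Commute (swap a b) (swap (τ a) (τ b)) := by
      refine Perm.Disjoint.commute fun k => ?_
      simp only [swap_apply_def]
      grind [hτ a, hτ b]
    refine ⟨swap a b * swap (τ a) (τ b), ?_, ?_, fun k hka hkb hkτa hkτb => ?_⟩
    · simpa only [Commute, hτ a, hτ b, ← hswap.eq] using (hconj a b).mul_right (hconj (τ a) (τ b))
    · rw [Perm.mul_apply, swap_apply_of_ne_of_ne ha.symm, swap_apply_left]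
      exact fun h => hab (by rw [h, hτ])
    · rw [Perm.mul_apply, swap_apply_of_ne_of_ne hkτa hkτb, swap_apply_of_ne_of_ne hka hkb]

/- Moving some `a ∈ A \ T` to some `b ∈ T \ A` by a permutation commuting with `τ` fixes `A ∩ T`
pointwise, since none of `a`, `b`, `τ a`, `τ b` lies in `A ∩ T`; so `T \ A` shrinks. -/
lemma exists_commute_image_eq [DecidableEq α] (hτ : Involutive τ) {A T : Finset α}
    (hA : ∀ a ∈ A, τ a ∉ A) (hT : ∀ a ∈ T, τ a ∉ T) (hcard : #A = #T) :
    ∃ v : Perm α, Commute τ v ∧ A.image v = T := by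
  induction hD : T \ A using Finset.strongInduction generalizing A with
  | H D ih =>
    subst hD
    by_cases hTA : T ⊆ A
    · refine ⟨1, .one_right τ, ?_⟩
      rw [← eq_of_subset_of_card_le hTA hcard.le]
      exact image_id
    obtain ⟨b, hbT, hbA⟩ := not_subset.1 hTA
    obtain ⟨a, haA, haT⟩ : ∃ a ∈ A, a ∉ T :=
      not_subset.1 fun hAT => hTA (eq_of_subset_of_card_le hAT hcard.ge).ge
    obtain ⟨u, hτu, hua, hu⟩ := exists_commute_apply_eq hτ
      (ne_of_mem_of_not_mem haA (hA a haA)).symm (ne_of_mem_of_not_mem hbT (hT b hbT)).symm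
    have hcomm (k : α) : τ (u k) = u (τ k) := Perm.ext_iff.1 hτu.eq k
    have hfix {k : α} (hkA : k ∈ A) (hkT : k ∈ T) : u k = k :=
      hu k (ne_of_mem_of_not_mem hkT haT) (ne_of_mem_of_not_mem hkA hbA)
        (ne_of_mem_of_not_mem hkA (hA a haA)) (ne_of_mem_of_not_mem hkT (hT b hbT))
    have hssub : T \ A.image u ⊂ T \ A := by
      refine (ssubset_iff_of_subset fun k hk => ?_).2 ⟨b, mem_sdiff.2 ⟨hbT, hbA⟩, fun hb => ?_⟩
      · obtain ⟨hkT, hk⟩ := mem_sdiff.1 hk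
        exact mem_sdiff.2 ⟨hkT, fun hkA => hk (mem_image.2 ⟨k, hkA, hfix hkA hkT⟩)⟩
      · exact (mem_sdiff.1 hb).2 (mem_image.2 ⟨a, haA, hua⟩)
    obtain ⟨v, hτv, hvT⟩ := ih _ hssub (A := A.image u)
      (by simpa only [forall_mem_image, hcomm, u.injective.mem_finset_image] using hA)
      (by rwa [card_image_of_injective _ u.injective]) rfl
    refine ⟨v * u, hτv.mul_right hτu, ?_⟩
    rw [Perm.coe_mul, ← image_image, hvT]

end Involution

section CorootCone

variable {ℓ : ℕ}

lemma coroot_eq_single_sub_single_s15 (j : Fin ℓ) :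
    coroot ℓ j = Pi.single j.castSucc 1 - Pi.single j.succ 1 := by
  ext k
  simp [coroot, Pi.single_apply, Fin.ext_iff]

lemma sum_coroot (j : Fin ℓ) : ∑ k, coroot ℓ j k = 0 := by
  simp [coroot_eq_single_sub_single_s15]

lemma sum_Iio_coroot_nonneg (j : Fin ℓ) (i : Fin (ℓ + 1)) : 0 ≤ ∑ k ∈ Iio i, coroot ℓ j k := by
  have hlt : j.succ < i → j.castSucc < i := j.castSucc_lt_succ.trans
  simp only [coroot_eq_single_sub_single_s15, Pi.sub_apply, sum_sub_distrib, Pi.single_apply,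
    sum_ite_eq', mem_Iio]
  grind

lemma eq_sum_sum_Iio_smul_coroot {x : Fin (ℓ + 1) → ℝ} (hx : ∑ k, x k = 0) :
    x = ∑ j : Fin ℓ, (∑ k ∈ Iio j.succ, x k) • coroot ℓ j := by
  have hIic (j : Fin ℓ) : Iio j.succ = Iic j.castSucc := by
    ext k
    rw [mem_Iio, mem_Iic, Fin.le_castSucc_iff]
  ext m
  have hcastSucc : ∑ j : Fin ℓ, (∑ k ∈ Iio j.succ, x k) * (if m = j.castSucc then 1 else 0) =
      ∑ k ∈ Iic m, x k := by
    have hlast : ∑ k ∈ Iic (Fin.last ℓ), x k = 0 := by rwa [← Fin.top_eq_last, Iic_top]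
    simpa [hIic, hlast] using (Fin.sum_univ_castSucc fun i =>
      (∑ k ∈ Iic i, x k) * (if m = i then 1 else 0)).symm
  have hsucc : ∑ j : Fin ℓ, (∑ k ∈ Iio j.succ, x k) * (if m = j.succ then 1 else 0) =
      ∑ k ∈ Iio m, x k := by
    have hzero : ∑ k ∈ Iio (0 : Fin (ℓ + 1)), x k = 0 := by rw [← bot_eq_zero, Iio_bot, sum_empty]
    simpa [hzero] using (Fin.sum_univ_succ fun i =>
      (∑ k ∈ Iio i, x k) * (if m = i then 1 else 0)).symm
  calc x m = ∑ k ∈ Iic m, x k - ∑ k ∈ Iio m, x k := by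
        rw [← Iio_insert, sum_insert notMem_Iio_self, add_sub_cancel_right]
    _ = (∑ j : Fin ℓ, (∑ k ∈ Iio j.succ, x k) • coroot ℓ j) m := by
        simp only [coroot_eq_single_sub_single_s15, Finset.sum_apply, Pi.smul_apply, Pi.sub_apply,
          Pi.single_apply, smul_eq_mul, mul_sub, sum_sub_distrib, hcastSucc, hsucc]

lemma mem_corootCone_iff_s15 {x : Fin (ℓ + 1) → ℝ} :
    x ∈ corootCone ℓ ↔ ∑ k, x k = 0 ∧ ∀ i, 0 ≤ ∑ k ∈ Iio i, x k := by
  constructor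
  · rintro ⟨c, hc, rfl⟩
    have hsum (s : Finset (Fin (ℓ + 1))) :
        ∑ k ∈ s, (∑ j, c j • coroot ℓ j) k = ∑ j, c j * ∑ k ∈ s, coroot ℓ j k := by
      simp only [Finset.sum_apply, Pi.smul_apply, smul_eq_mul, mul_sum]
      exact sum_comm
    simp only [hsum, sum_coroot, mul_zero, sum_const_zero, true_and]
    exact fun i => sum_nonneg fun j _ => mul_nonneg (hc j) (sum_Iio_coroot_nonneg j i)
  · rintro ⟨hx, hnonneg⟩
    exact ⟨_, fun j => hnonneg j.succ, eq_sum_sum_Iio_smul_coroot hx⟩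

lemma geOrd_iff {w : Perm (Fin (ℓ + 1))} {h h' : Fin (ℓ + 1) → ℝ} :
    geOrd ℓ w h h' ↔ ∑ k, h' k = ∑ k, h k ∧
      ∀ i, ∑ k ∈ Iio i, h' (w k) ≤ ∑ k ∈ Iio i, h (w k) := by
  simp only [geOrd, mem_corootCone_iff_s15, act, inv_inv, Pi.sub_apply, sum_sub_distrib, sub_nonneg,
    sub_eq_zero, Equiv.sum_comp w, eq_comm]

end CorootCone

section FixedPermutations

variable {ℓ : ℕ}

lemma apply_rev_of_Jmap_eq_self {x : Fin (ℓ + 1) → ℝ} (hx : Jmap ℓ x = x) (k : Fin (ℓ + 1)) :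
    x k.rev = -x k := by
  rw [← congrFun hx k, Jmap, neg_neg]

lemma exists_commute_w0_image_Iio_eq {T : Finset (Fin (ℓ + 1))} (hT : ∀ a ∈ T, a.rev ∉ T) :
    ∃ v : Perm (Fin (ℓ + 1)), ∃ i, Commute (w0 ℓ) v ∧ (Iio i).image v = T := by
  have hcard : 2 * #T ≤ ℓ + 1 := by
    simpa only [Fintype.card_fin] using two_mul_card_le_card_of_apply_notMem Fin.rev_injective hT
  let i : Fin (ℓ + 1) := ⟨#T, by omega⟩
  have hi : ∀ a ∈ Iio i, a.rev ∉ Iio i := by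
    intro a ha
    simp only [i, mem_Iio, Fin.lt_def, Fin.val_rev] at ha ⊢
    omega
  obtain ⟨v, hv, hvT⟩ := exists_commute_image_eq (τ := w0 ℓ) Fin.rev_involutive hi hT
    (Fin.card_Iio i)
  exact ⟨v, i, hv, hvT⟩

lemma exists_conj_w0_eq_self_sum_eq (S : Finset (Fin (ℓ + 1))) :
    ∃ v : Perm (Fin (ℓ + 1)), ∃ i, w0 ℓ * v * w0 ℓ = v ∧
      ∀ x, Jmap ℓ x = x → ∑ k ∈ Iio i, x (v k) = ∑ k ∈ S, x k := by
  obtain ⟨v, i, hv, hvS⟩ := exists_commute_w0_image_Iio_eq (T := {k ∈ S | k.rev ∉ S})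
    fun a ha hrev => (mem_filter.1 ha).2 (mem_filter.1 hrev).1
  have hw0 : w0 ℓ * w0 ℓ = 1 := Perm.ext Fin.rev_rev
  refine ⟨v, i, by rw [hv.eq, mul_assoc, hw0, mul_one], fun x hx => ?_⟩
  calc ∑ k ∈ Iio i, x (v k) = ∑ k ∈ (Iio i).image v, x k := by
        rw [sum_image v.injective.injOn]
    _ = ∑ k ∈ S, x k := by
        rw [hvS, sum_filter_apply_notMem_of_odd Fin.rev_involutive (apply_rev_of_Jmap_eq_self hx)]

lemma geOrd_of_forall_conj_w0_eq_self {μ : Perm (Fin (ℓ + 1)) → Fin (ℓ + 1) → ℝ}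
    (hμ : ∀ v w, w0 ℓ * v * w0 ℓ = v → geOrd ℓ w (μ v) (μ w))
    (hfix : ∀ v, w0 ℓ * v * w0 ℓ = v → Jmap ℓ (μ v) = μ v)
    {h : Fin (ℓ + 1) → ℝ} (hJ : Jmap ℓ h = h)
    (hh : ∀ v, w0 ℓ * v * w0 ℓ = v → geOrd ℓ v h (μ v)) (w : Perm (Fin (ℓ + 1))) :
    geOrd ℓ w h (μ w) := by
  have hle (i : Fin (ℓ + 1)) : ∑ k ∈ Iio i, μ w (w k) ≤ ∑ k ∈ Iio i, h (w k) := by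
    obtain ⟨v, j, hv, hsum⟩ := exists_conj_w0_eq_self_sum_eq ((Iio i).image w)
    simp only [sum_image w.injective.injOn] at hsum
    calc ∑ k ∈ Iio i, μ w (w k) ≤ ∑ k ∈ Iio i, μ v (w k) := (geOrd_iff.1 (hμ v w hv)).2 i
      _ = ∑ k ∈ Iio j, μ v (v k) := (hsum _ (hfix v hv)).symm
      _ ≤ ∑ k ∈ Iio j, h (v k) := (geOrd_iff.1 (hh v hv)).2 j
      _ = ∑ k ∈ Iio i, h (w k) := hsum h hJ
  have hw0 : w0 ℓ * w0 ℓ * w0 ℓ = w0 ℓ := Perm.ext fun k => Fin.rev_rev k.rev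
  have htotal : ∑ k, μ w k = ∑ k, h k :=
    (geOrd_iff.1 (hμ _ w hw0)).1.trans (geOrd_iff.1 (hh _ hw0)).1
  exact geOrd_iff.2 ⟨htotal, hle⟩

end FixedPermutations

end MV

theorem stmt15_general (ℓ : ℕ) (μ : Equiv.Perm (Fin (ℓ + 1)) → Fin (ℓ + 1) → ℝ)
    (hμ : ∀ v w, w0 ℓ * v * w0 ℓ = v → geOrd ℓ w (μ v) (μ w))
    (hfix : ∀ v, w0 ℓ * v * w0 ℓ = v → Jmap ℓ (μ v) = μ v) :
    {h | h ∈ Vsub ℓ ∧ Jmap ℓ h = h ∧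
        ∀ w : Equiv.Perm (Fin (ℓ + 1)), w0 ℓ * w * w0 ℓ = w → geOrd ℓ w h (μ w)}
    = {h | h ∈ Vsub ℓ ∧ ∀ w, geOrd ℓ w h (μ w)} ∩ {h | Jmap ℓ h = h} := by
  ext h
  constructor
  · rintro ⟨hV, hJ, hh⟩
    exact ⟨⟨hV, geOrd_of_forall_conj_w0_eq_self hμ hfix hJ hh⟩, hJ⟩
  · rintro ⟨⟨hV, hh⟩, hJ⟩
    exact ⟨hV, hJ, fun w _ => hh w⟩

/-- the folded polytope cut out by the conditions at `ω`-fixed Weyl group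
elements equals the intersection of the full pseudo-Weyl polytope with `Fix(J)`. -/
theorem stmt15 (ℓ n : ℕ) (hn : 2 ≤ n) (hln : ℓ = 2 * n - 1 ∨ ℓ = 2 * n)
    (μ : Equiv.Perm (Fin (ℓ+1)) → Fin (ℓ+1) → ℝ) (hμ : μ ∈ calV ℓ)
    (hfix : ∀ w, Jmap ℓ (μ (w0 ℓ * w * w0 ℓ)) = μ w) :
    {h | h ∈ Vsub ℓ ∧ Jmap ℓ h = h ∧
        ∀ w : Equiv.Perm (Fin (ℓ+1)), w0 ℓ * w * w0 ℓ = w → geOrd ℓ w h (μ w)}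
    = {h | h ∈ Vsub ℓ ∧ ∀ w, geOrd ℓ w h (μ w)} ∩ {h | Jmap ℓ h = h} :=
  stmt15_general ℓ μ (fun v w _ => hμ.2.1 w v) fun v hv => by simpa only [hv] using hfix v
end
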